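/- Let a cell-probe data structure with word size w solve the set disjointness problem on universe [n] with a memoryless update algorithm and an adaptive query algorithm. Fix S ⊆ Fin n, let M* be the memory obtained by preprocessing S and then inserting the elements of the complement Fin n \ S in increasing order, and let C be the set of addresses probed by the query algorithm when run on M*. Then for every T ⊆ Fin n, if the memory M_T obtained by preprocessing S and inserting the elements of T in increasing order agrees with M* on every address in C, then the query run on M_T probes exactly the cells of C and answers 'disjoint'; in particular S ∩ T = ∅. -/

import Mathlib

/-- A memory state with word size `w`: each of the `2^w` cell addresses stores a `w`-bit word. -/
abbrev Memory (w : ℕ) := Fin (2 ^ w) → BitVec w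

/-- Executing a single memoryless update `x`: cell `c` is mapped through `g x c` if
`c` belongs to the probe set `U x`, and is left unchanged otherwise. -/
def memStep (w n : ℕ) (U : Fin n → Finset (Fin (2 ^ w)))
    (g : Fin n → Fin (2 ^ w) → BitVec w → BitVec w)
    (x : Fin n) (M : Memory w) : Memory w :=
  fun c => if c ∈ U x then g x c (M c) else M c

/-- Executing a finite sequence of memoryless updates in order. -/
def memExec (w n : ℕ) (U : Fin n → Finset (Fin (2 ^ w)))
    (g : Fin n → Fin (2 ^ w) → BitVec w → BitVec w)
    (xs : List (Fin n)) (M : Memory w) : Memory w :=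
  xs.foldl (fun M x => memStep w n U g x M) M

/-- The sequence of words read by an adaptive query algorithm with address functions `addr`
on memory `M`: at step `s` it reads the cell whose address is determined by the words read
at the previous steps. -/
def queryReads (w t : ℕ) (M : Memory w)
    (addr : (s : Fin t) → (Fin s.val → BitVec w) → Fin (2 ^ w)) :
    Fin t → BitVec w
  | s => M (addr s (fun j => queryReads w t M addr ⟨j.val, j.isLt.trans s.isLt⟩))
  termination_by s => s.val

/-- The address probed at step `s` by the adaptive query algorithm on memory `M`. -/
def queryAddr (w t : ℕ) (M : Memory w)
    (addr : (s : Fin t) → (Fin s.val → BitVec w) → Fin (2 ^ w))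
    (s : Fin t) : Fin (2 ^ w) :=
  addr s (fun j => queryReads w t M addr ⟨j.val, j.isLt.trans s.isLt⟩)

theorem queryReads_congr (w t : ℕ) (M N : Memory w)
    (addr : (s : Fin t) → (Fin s.val → BitVec w) → Fin (2 ^ w))
    (h : ∀ s, N (queryAddr w t M addr s) = M (queryAddr w t M addr s)) :
    ∀ (k : ℕ) (hk : k < t), queryReads w t N addr ⟨k, hk⟩ = queryReads w t M addr ⟨k, hk⟩ := by
  intro k
  induction k using Nat.strong_induction_on with
  | _ k ih =>
    intro hk
    have e : (fun j : Fin k => queryReads w t N addr ⟨j.val, j.isLt.trans hk⟩)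
        = fun j : Fin k => queryReads w t M addr ⟨j.val, j.isLt.trans hk⟩ :=
      funext fun j => ih j.val j.isLt _
    rw [queryReads, queryReads]
    have h1 := h ⟨k, hk⟩
    unfold queryAddr at h1
    exact (congrArg (fun f => N (addr ⟨k, hk⟩ f)) e).trans h1

/-- Fix `S ⊆ Fin n`, let `M*` be the memory obtained by preprocessing `S` and inserting the
elements of the complement of `S` in increasing order, and let `C` be the set of addresses
probed by the adaptive query algorithm on `M*`.  For every `T`, if the memory obtained by
preprocessing `S` and inserting the elements of `T` in increasing order agrees with `M*` on
every address of `C`, then the query run on that memory probes exactly the cells of `C` and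
answers `disjoint`; in particular `S ∩ T = ∅`. -/
theorem memoryless_disjointness_decoding
    (w n t_q : ℕ)
    (U : Fin n → Finset (Fin (2 ^ w)))
    (g : Fin n → Fin (2 ^ w) → BitVec w → BitVec w)
    (addr : (s : Fin t_q) → (Fin s.val → BitVec w) → Fin (2 ^ w))
    (ans : (Fin t_q → BitVec w) → Bool)
    (P : Finset (Fin n) → Memory w)
    (hsolve : ∀ S T : Finset (Fin n),
      ans (queryReads w t_q (memExec w n U g (T.sort (· ≤ ·)) (P S)) addr)
        = decide (S ∩ T = ∅))
    (S : Finset (Fin n)) :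
    let Mstar := memExec w n U g ((Sᶜ).sort (· ≤ ·)) (P S)
    let C := Finset.image (queryAddr w t_q Mstar addr) Finset.univ
    ∀ T : Finset (Fin n),
      let MT := memExec w n U g (T.sort (· ≤ ·)) (P S)
      (∀ c ∈ C, MT c = Mstar c) →
        Finset.image (queryAddr w t_q MT addr) Finset.univ = C ∧
        ans (queryReads w t_q MT addr) = true ∧
        S ∩ T = ∅ := by
  intro Mstar C T MT hC
  have hr : queryReads w t_q MT addr = queryReads w t_q Mstar addr :=
    funext fun s => queryReads_congr w t_q Mstar MT addr
      (fun s => hC _ (Finset.mem_image_of_mem _ (Finset.mem_univ s))) s.val s.isLt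
  have ha : queryAddr w t_q MT addr = queryAddr w t_q Mstar addr := by
    funext s
    unfold queryAddr
    rw [hr]
  have ht : ans (queryReads w t_q MT addr) = true := by
    rw [hr, hsolve S Sᶜ]
    simp
  refine ⟨by rw [ha], ht, ?_⟩
  have h2 := hsolve S T
  rw [ht] at h2
  exact of_decide_eq_true h2.symm
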